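/- arXiv:2111.05361 — 2 statements merged into one kernel-verified Lean document; each statement's English description precedes it below -/
import Mathlib

section
/- Let k, λ > 0, let D ⊂ ℝ³ be a bounded set, and let v : ℝ³ → ℝ be a bounded measurable function with support contained in D. Then the Yukawa potential w(x) := ∫_{ℝ³} k·e^{−λ‖x−y‖}/‖x−y‖ · v(y) dy is continuously differentiable on ℝ³, its gradient is given by differentiation under the integral sign, ∇w(x) = ∫_{ℝ³} ∇_x G(x−y; k, λ) v(y) dy, and ∇w is bounded with ‖∇w(x)‖ ≤ (8πk/λ)·sup|v| for all x ∈ ℝ³; that is, w ∈ C¹_b(ℝ³; ℝ). -/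
open MeasureTheory

/-!
Let `f` be bounded and let `g` be an integrable kernel which is `C¹` off the origin with integrable
derivative `g'`. In dimension at least two almost every line of a given direction avoids the origin,
so the fundamental theorem of calculus along such lines and Fubini's theorem give
`(f ⋆ g) (x + h) - (f ⋆ g) x = ∫₀¹ (f ⋆ g') (x + s h) h ds`.
As the convolution of a bounded and an integrable function, `f ⋆ g'` is continuous, so `f ⋆ g` is
`C¹` with derivative `f ⋆ g'`, which is bounded by `sup ‖f‖ * ‖g'‖₁`. For the Yukawa kernel on `ℝ³`,
polar coordinates give `‖∇G‖₁ = 4πk ∫₀^∞ e^{-λr} (1 + λr) dr = 8πk/λ`.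
-/

open scoped Convolution

section BoundedConvolution

variable {𝕜 G E E' F : Type*} [NontriviallyNormedField 𝕜]
  [NormedAddCommGroup E] [NormedSpace 𝕜 E] [NormedAddCommGroup E'] [NormedSpace 𝕜 E']
  [NormedAddCommGroup F] [NormedSpace 𝕜 F] (L : E →L[𝕜] E' →L[𝕜] F)
  [AddCommGroup G] [MeasurableSpace G] {μ : Measure G} [μ.IsAddLeftInvariant] [μ.IsNegInvariant]
  {f : G → E} {g : G → E'} {M : ℝ}

lemma integrable_prod_clm_sub_of_ae_norm_le [MeasurableAdd₂ G] [MeasurableNeg G] [SFinite μ]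
    {α : Type*} [MeasurableSpace α] {ν : Measure α} [IsFiniteMeasure ν]
    (hf : AEStronglyMeasurable f μ) (hfM : ∀ᵐ y ∂μ, ‖f y‖ ≤ M) (hg : Integrable g μ)
    {γ : α → G} (hγ : Measurable γ) :
    Integrable (fun p : α × G => L (f p.2) (g (γ p.1 - p.2))) (ν.prod μ) := by
  have shear : MeasurePreserving (fun p : α × G => (p.1, γ p.1 - p.2)) (ν.prod μ) (ν.prod μ) :=
    (MeasurePreserving.id ν).skew_product (g := fun a y => γ a - y) (by fun_prop)
      (.of_forall fun a => (Measure.measurePreserving_sub_left μ (γ a)).map_eq)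
  have hgγ : Integrable (fun p : α × G => g (γ p.1 - p.2)) (ν.prod μ) :=
    shear.integrable_comp_of_integrable (hg.comp_snd ν)
  refine (hgγ.norm.const_mul (‖L‖ * M)).mono'
    (L.aestronglyMeasurable_comp₂ hf.comp_snd hgγ.aestronglyMeasurable) ?_
  filter_upwards [Measure.quasiMeasurePreserving_snd.ae hfM] with p hp
  exact L.le_of_opNorm₂_le_of_le le_rfl hp le_rfl

section Translation

variable [MeasurableAdd G] [MeasurableNeg G]

lemma convolutionExists_of_ae_norm_le (hf : AEStronglyMeasurable f μ)
    (hfM : ∀ᵐ y ∂μ, ‖f y‖ ≤ M) (hg : Integrable g μ) : ConvolutionExists f g L μ := by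
  intro x
  refine ((hg.comp_sub_left x).norm.const_mul (‖L‖ * M)).mono'
    (L.aestronglyMeasurable_comp₂ hf (hg.comp_sub_left x).aestronglyMeasurable) ?_
  filter_upwards [hfM] with y hy
  exact L.le_of_opNorm₂_le_of_le le_rfl hy le_rfl

lemma norm_convolution_le_of_ae_norm_le [NormedSpace ℝ F] (hfM : ∀ᵐ y ∂μ, ‖f y‖ ≤ M)
    (hg : Integrable g μ) (x : G) : ‖(f ⋆[L, μ] g) x‖ ≤ ‖L‖ * M * ∫ y, ‖g y‖ ∂μ := by
  rw [← integral_sub_left_eq_self (‖g ·‖) μ x, ← integral_const_mul]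
  refine norm_integral_le_of_norm_le ((hg.comp_sub_left x).norm.const_mul _) ?_
  filter_upwards [hfM] with y hy
  exact L.le_of_opNorm₂_le_of_le le_rfl hy le_rfl

end Translation

lemma continuous_convolution_of_ae_norm_le [TopologicalSpace G] [IsTopologicalAddGroup G]
    [LocallyCompactSpace G] [SecondCountableTopology G] [BorelSpace G] [μ.Regular]
    [NormedSpace ℝ E'] [NormedSpace ℝ F] (hf : AEStronglyMeasurable f μ)
    (hfM : ∀ᵐ y ∂μ, ‖f y‖ ≤ M) (hg : Integrable g μ) : Continuous (f ⋆[L, μ] g) := by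
  refine continuous_of_uniform_approx_of_continuous fun u hu => ?_
  obtain ⟨ε, hε, hεu⟩ := Metric.mem_uniformity_dist.1 hu
  obtain ⟨δ, hδ, hδε⟩ := exists_pos_mul_lt hε (‖L‖ * |M|)
  obtain ⟨φ, hφ_supp, hφ_dist, hφ_cont, hφ_int⟩ := hg.exists_hasCompactSupport_integral_sub_le hδ
  have hf_loc : LocallyIntegrable f μ := (memLp_top_of_bound hf M hfM).locallyIntegrable le_top
  refine ⟨f ⋆[L, μ] φ, hφ_supp.continuous_convolution_right L hf_loc hφ_cont, fun x => hεu ?_⟩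
  have sub_eq : (f ⋆[L, μ] g) x - (f ⋆[L, μ] φ) x = (f ⋆[L, μ] (g - φ)) x := by
    simp only [convolution_def, Pi.sub_apply, map_sub]
    exact (integral_sub (convolutionExists_of_ae_norm_le L hf hfM hg x)
      (convolutionExists_of_ae_norm_le L hf hfM hφ_int x)).symm
  calc dist ((f ⋆[L, μ] g) x) ((f ⋆[L, μ] φ) x)
      = ‖(f ⋆[L, μ] (g - φ)) x‖ := by rw [dist_eq_norm, sub_eq]
    _ ≤ ‖L‖ * |M| * ∫ y, ‖g y - φ y‖ ∂μ :=
      norm_convolution_le_of_ae_norm_le L (hfM.mono fun _ h => h.trans (le_abs_self M))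
        (hg.sub hφ_int) x
    _ ≤ ‖L‖ * |M| * δ := by gcongr
    _ < ε := hδε

end BoundedConvolution

section SegmentIntegral

variable {V E F : Type*} [NormedAddCommGroup V] [NormedSpace ℝ V]
  [NormedAddCommGroup E] [NormedSpace ℝ E] [NormedAddCommGroup F] [NormedSpace ℝ F]
  [CompleteSpace F]

lemma hasFDerivAt_of_forall_sub_eq_intervalIntegral {w : V → F} {w' : V → V →L[ℝ] F}
    (hw' : Continuous w') {x : V}
    (hw : ∀ h, w (x + h) - w x = ∫ s in (0 : ℝ)..1, w' (x + s • h) h) :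
    HasFDerivAt w (w' x) x := by
  rw [hasFDerivAt_iff_isLittleO_nhds_zero, Asymptotics.isLittleO_iff]
  intro ε hε
  obtain ⟨δ, hδ, hball⟩ := Metric.continuous_iff.1 hw' x ε hε
  filter_upwards [Metric.ball_mem_nhds (0 : V) hδ] with h hh
  have sub_eq : w (x + h) - w x - w' x h = ∫ s in (0 : ℝ)..1, (w' (x + s • h) - w' x) h := by
    have cont : Continuous fun s : ℝ => w' (x + s • h) h := by fun_prop
    simp only [sub_apply]
    rw [intervalIntegral.integral_sub (cont.intervalIntegrable 0 1) intervalIntegrable_const, hw]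
    simp
  have norm_le : ∀ s ∈ Set.uIoc (0 : ℝ) 1, ‖(w' (x + s • h) - w' x) h‖ ≤ ε * ‖h‖ := by
    intro s hs
    rw [Set.uIoc_of_le zero_le_one] at hs
    refine ContinuousLinearMap.le_of_opNorm_le _ ?_ h
    rw [← dist_eq_norm]
    refine (hball _ ?_).le
    rw [dist_self_add_left, norm_smul, Real.norm_of_nonneg hs.1.le]
    exact (mul_le_of_le_one_left (norm_nonneg h) hs.2).trans_lt (mem_ball_zero_iff.1 hh)
  simpa [sub_eq] using intervalIntegral.norm_integral_le_of_norm_le_const norm_le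

lemma intervalIntegral_clm_fderiv_add_smul_eq_sub {g : V → E} {g' : V → V →L[ℝ] E} {s : Set V}
    (hg : ∀ x ∈ s, HasFDerivAt g (g' x) x) (hg' : ContinuousOn g' s) (T : E →L[ℝ] F)
    {z h : V} (hz : ∀ t : ℝ, z + t • h ∈ s) :
    ∫ t in (0 : ℝ)..1, T (g' (z + t • h) h) = T (g (z + h)) - T (g z) := by
  have hasDerivAt_line (t : ℝ) :
      HasDerivAt (fun t : ℝ => T (g (z + t • h))) (T (g' (z + t • h) h)) t := by
    have line : HasDerivAt (fun t : ℝ => z + t • h) h t := by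
      simpa using ((hasDerivAt_id t).smul_const h).const_add z
    exact T.hasFDerivAt.comp_hasDerivAt t ((hg _ (hz t)).comp_hasDerivAt t line)
  have cont_line : Continuous fun t : ℝ => g' (z + t • h) :=
    hg'.comp_continuous (by fun_prop) hz
  have cont : Continuous fun t : ℝ => T (g' (z + t • h) h) :=
    T.continuous.comp (cont_line.clm_apply continuous_const)
  simpa using intervalIntegral.integral_eq_sub_of_hasDerivAt (fun t _ => hasDerivAt_line t)
    (cont.intervalIntegrable 0 1)

end SegmentIntegral

section SingularKernel

variable {V : Type*} [NormedAddCommGroup V] [MeasurableSpace V] [BorelSpace V]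

section NormedSpace

variable [NormedSpace ℝ V] [FiniteDimensional ℝ V] {μ : Measure V} [μ.IsAddHaarMeasure]

lemma ae_forall_add_smul_ne_zero (hV : 1 < Module.finrank ℝ V) (h : V) :
    ∀ᵐ z ∂μ, ∀ s : ℝ, z + s • h ≠ 0 := by
  have span_ne_top : Submodule.span ℝ {h} ≠ ⊤ :=
    (span_lt_top_of_card_lt_finrank (by simpa using hV)).ne
  filter_upwards [compl_mem_ae_iff.2 (Measure.addHaar_submodule μ _ span_ne_top)] with z hz s hs
  refine hz (Submodule.mem_span_singleton.2 ⟨-s, ?_⟩)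
  rw [neg_smul, eq_neg_of_add_eq_zero_left hs]

variable {E E' F : Type*} [NormedAddCommGroup E] [NormedSpace ℝ E]
  [NormedAddCommGroup E'] [NormedSpace ℝ E'] [NormedAddCommGroup F] [NormedSpace ℝ F]
  [CompleteSpace F] (L : E →L[ℝ] E' →L[ℝ] F)
  {f : V → E} {g : V → E'} {g' : V → V →L[ℝ] E'} {M : ℝ}

lemma convolution_add_sub_eq_intervalIntegral (hV : 1 < Module.finrank ℝ V)
    (hf : AEStronglyMeasurable f μ) (hfM : ∀ᵐ y ∂μ, ‖f y‖ ≤ M)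
    (hg : Integrable g μ) (hg' : Integrable g' μ)
    (hgg' : ∀ z ≠ 0, HasFDerivAt g (g' z) z) (hg'_cont : ContinuousOn g' {0}ᶜ) (x h : V) :
    (f ⋆[L, μ] g) (x + h) - (f ⋆[L, μ] g) x =
      ∫ s in (0 : ℝ)..1, (f ⋆[L.precompR V, μ] g') (x + s • h) h := by
  have ftc : ∀ᵐ y ∂μ, L (f y) (g (x + h - y)) - L (f y) (g (x - y)) =
      ∫ s in (0 : ℝ)..1, L.precompR V (f y) (g' (x + s • h - y)) h := by
    filter_upwards [(Measure.measurePreserving_sub_left μ x).quasiMeasurePreserving.ae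
      (ae_forall_add_smul_ne_zero hV h)] with y hy
    have segment := intervalIntegral_clm_fderiv_add_smul_eq_sub hgg' hg'_cont (L (f y)) hy
    simp only [sub_add_eq_add_sub] at segment
    exact segment.symm
  have integrable_prod :
      Integrable (fun p : ℝ × V => L.precompR V (f p.2) (g' (x + p.1 • h - p.2)) h)
        ((volume.restrict (Set.uIoc 0 1)).prod μ) :=
    have : IsFiniteMeasure (volume.restrict (Set.uIoc (0 : ℝ) 1)) := ⟨by simp⟩
    (integrable_prod_clm_sub_of_ae_norm_le (L.precompR V) hf hfM hg'
      (γ := fun s : ℝ => x + s • h) (by fun_prop)).apply_continuousLinearMap h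
  calc (f ⋆[L, μ] g) (x + h) - (f ⋆[L, μ] g) x
      = ∫ y, (L (f y) (g (x + h - y)) - L (f y) (g (x - y))) ∂μ :=
        (integral_sub (convolutionExists_of_ae_norm_le L hf hfM hg (x + h))
          (convolutionExists_of_ae_norm_le L hf hfM hg x)).symm
    _ = ∫ y, (∫ s in (0 : ℝ)..1, L.precompR V (f y) (g' (x + s • h - y)) h) ∂μ :=
        integral_congr_ae ftc
    _ = ∫ s in (0 : ℝ)..1, (∫ y, L.precompR V (f y) (g' (x + s • h - y)) h ∂μ) :=
        (intervalIntegral_integral_swap integrable_prod).symm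
    _ = ∫ s in (0 : ℝ)..1, (f ⋆[L.precompR V, μ] g') (x + s • h) h := by
        simp only [convolution_def, ContinuousLinearMap.integral_apply
          (convolutionExists_of_ae_norm_le (L.precompR V) hf hfM hg' _)]

theorem hasFDerivAt_convolution_of_ae_norm_le (hV : 1 < Module.finrank ℝ V)
    (hf : AEStronglyMeasurable f μ) (hfM : ∀ᵐ y ∂μ, ‖f y‖ ≤ M)
    (hg : Integrable g μ) (hg' : Integrable g' μ)
    (hgg' : ∀ z ≠ 0, HasFDerivAt g (g' z) z) (hg'_cont : ContinuousOn g' {0}ᶜ) (x : V) :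
    HasFDerivAt (f ⋆[L, μ] g) ((f ⋆[L.precompR V, μ] g') x) x :=
  hasFDerivAt_of_forall_sub_eq_intervalIntegral
    (continuous_convolution_of_ae_norm_le (L.precompR V) hf hfM hg')
    (convolution_add_sub_eq_intervalIntegral L hV hf hfM hg hg' hgg' hg'_cont x)

end NormedSpace

section InnerProductSpace

variable [InnerProductSpace ℝ V] [FiniteDimensional ℝ V]
  {v K : V → ℝ} {K' : V → V} {M : ℝ}

theorem hasGradientAt_convolution_of_ae_norm_le (hV : 1 < Module.finrank ℝ V)
    (hv : AEStronglyMeasurable v) (hvM : ∀ᵐ y, ‖v y‖ ≤ M)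
    (hK : Integrable K) (hK' : Integrable K') (hKK' : ∀ z ≠ 0, HasGradientAt K (K' z) z)
    (hK'_cont : ContinuousOn K' {0}ᶜ) (x : V) :
    HasGradientAt (v ⋆ K) ((v ⋆ K') x) x := by
  let dual := InnerProductSpace.toDual ℝ V
  have integrable_dual : Integrable fun z => dual (K' z) :=
    hK'.mono (dual.continuous.comp_aestronglyMeasurable hK'.1) (.of_forall fun z => by simp)
  have integrable_slice :
      Integrable fun y => (ContinuousLinearMap.lsmul ℝ ℝ).precompR V (v y) (dual (K' (x - y))) :=
    convolutionExists_of_ae_norm_le _ hv hvM integrable_dual x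
  have dual_convolution : dual ((v ⋆ K') x) =
      (v ⋆[(ContinuousLinearMap.lsmul ℝ ℝ).precompR V, volume] fun z => dual (K' z)) x := by
    ext h
    calc dual ((v ⋆ K') x) h = inner ℝ h (∫ y, v y • K' (x - y)) := real_inner_comm _ _
      _ = ∫ y, inner ℝ h (v y • K' (x - y)) :=
        (integral_inner (convolutionExists_of_ae_norm_le (.lsmul ℝ ℝ) hv hvM hK' x) h).symm
      _ = ∫ y, (ContinuousLinearMap.lsmul ℝ ℝ).precompR V (v y) (dual (K' (x - y))) h := by
        simp [dual, inner_smul_right, real_inner_comm h]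
      _ = _ := (ContinuousLinearMap.integral_apply integrable_slice h).symm
  rw [hasGradientAt_iff_hasFDerivAt]
  exact dual_convolution ▸ hasFDerivAt_convolution_of_ae_norm_le (.lsmul ℝ ℝ) hV hv hvM hK
    integrable_dual hKK' (dual.continuous.comp_continuousOn hK'_cont) x

theorem contDiff_one_convolution_of_ae_norm_le (hV : 1 < Module.finrank ℝ V)
    (hv : AEStronglyMeasurable v) (hvM : ∀ᵐ y, ‖v y‖ ≤ M)
    (hK : Integrable K) (hK' : Integrable K') (hKK' : ∀ z ≠ 0, HasGradientAt K (K' z) z)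
    (hK'_cont : ContinuousOn K' {0}ᶜ) : ContDiff ℝ 1 (v ⋆ K) :=
  contDiff_one_iff_hasFDerivAt.2
    ⟨_, (InnerProductSpace.toDual ℝ V).continuous.comp
      (continuous_convolution_of_ae_norm_le (.lsmul ℝ ℝ) hv hvM hK'),
      hasGradientAt_convolution_of_ae_norm_le hV hv hvM hK hK' hKK' hK'_cont⟩

end InnerProductSpace

end SingularKernel

lemma hasGradientAt_comp_norm {V : Type*} [NormedAddCommGroup V] [InnerProductSpace ℝ V]
    [CompleteSpace V] {φ : ℝ → ℝ} {φ' : ℝ} {x : V} (hx : x ≠ 0) (hφ : HasDerivAt φ φ' ‖x‖) :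
    HasGradientAt (fun z => φ ‖z‖) ((φ' / ‖x‖) • x) x := by
  have hx' : ‖x‖ ≠ 0 := norm_ne_zero_iff.2 hx
  have norm_deriv : HasFDerivAt (fun z : V => ‖z‖) (‖x‖⁻¹ • innerSL ℝ x) x := by
    simpa [Real.sqrt_sq, ← ofNat_smul_eq_nsmul ℝ, smul_smul] using
      (hasStrictFDerivAt_norm_sq x).hasFDerivAt.sqrt (pow_ne_zero 2 hx')
  rw [hasGradientAt_iff_hasFDerivAt]
  refine (hφ.comp_hasFDerivAt x norm_deriv).congr_fderiv ?_
  ext z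
  simp [div_eq_mul_inv, mul_assoc]

lemma integrableOn_pow_mul_exp_neg_mul_Ioi (n : ℕ) {l : ℝ} (hl : 0 < l) :
    IntegrableOn (fun r : ℝ => r ^ n * Real.exp (-l * r)) (Set.Ioi 0) := by
  simpa using integrableOn_rpow_mul_exp_neg_mul_rpow (s := n) (p := 1)
    (by linarith [n.cast_nonneg (α := ℝ)]) one_pos hl

lemma integral_pow_mul_exp_neg_mul_Ioi (n : ℕ) {l : ℝ} (hl : 0 < l) :
    ∫ r in Set.Ioi (0 : ℝ), r ^ n * Real.exp (-l * r) = n.factorial / l ^ (n + 1) := by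
  have h := Real.integral_rpow_mul_exp_neg_mul_Ioi (a := n + 1) (by positivity) hl
  rw [Real.Gamma_nat_eq_factorial, ← Nat.cast_succ, Real.rpow_natCast] at h
  simpa [div_eq_inv_mul] using h

section Yukawa

variable {V : Type*} [NormedAddCommGroup V]

/-- The Yukawa kernel `G(x; k, l) = k e^{-l‖x‖} / ‖x‖`; its value at the origin is `0`. -/
noncomputable def yukawaKernel (k l : ℝ) (x : V) : ℝ :=
  k * Real.exp (-l * ‖x‖) / ‖x‖

/-- The gradient `∇G(x; k, l) = -k e^{-l‖x‖} (1 + l‖x‖) x / ‖x‖³` of the Yukawa kernel away from the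
origin, where its value is `0`. -/
noncomputable def yukawaKernelGradient [NormedSpace ℝ V] (k l : ℝ) (x : V) : V :=
  (-(k * Real.exp (-l * ‖x‖) * (1 + l * ‖x‖) / ‖x‖ ^ 3)) • x

lemma norm_yukawaKernelGradient [NormedSpace ℝ V] (k : ℝ) {l : ℝ} (hl : 0 ≤ l) (x : V) :
    ‖yukawaKernelGradient k l x‖ = |k| * (Real.exp (-l * ‖x‖) * (1 + l * ‖x‖) / ‖x‖ ^ 2) := by
  obtain rfl | hx := eq_or_ne x 0
  · simp [yukawaKernelGradient]
  have hx' : ‖x‖ ≠ 0 := norm_ne_zero_iff.2 hx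
  have nonneg : 0 ≤ 1 + l * ‖x‖ := by positivity
  rw [yukawaKernelGradient, norm_smul, norm_neg, norm_div, norm_mul, norm_mul, norm_pow, norm_norm,
    Real.norm_of_nonneg nonneg, Real.norm_of_nonneg (Real.exp_nonneg _), Real.norm_eq_abs]
  field_simp

lemma continuousOn_yukawaKernelGradient [NormedSpace ℝ V] (k l : ℝ) :
    ContinuousOn (yukawaKernelGradient k l : V → V) {0}ᶜ := by
  unfold yukawaKernelGradient
  exact ((ContinuousOn.div (by fun_prop) (by fun_prop)
    fun x hx => pow_ne_zero 3 (norm_ne_zero_iff.2 hx)).neg).smul continuousOn_id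

lemma hasGradientAt_yukawaKernel [InnerProductSpace ℝ V] [CompleteSpace V] (k l : ℝ) {x : V}
    (hx : x ≠ 0) : HasGradientAt (yukawaKernel k l) (yukawaKernelGradient k l x) x := by
  have hx' : ‖x‖ ≠ 0 := norm_ne_zero_iff.2 hx
  have profile_deriv : HasDerivAt (fun r => k * Real.exp (-l * r) / r)
      (-(k * Real.exp (-l * ‖x‖) * (1 + l * ‖x‖) / ‖x‖ ^ 2)) ‖x‖ := by
    refine (((((hasDerivAt_id ‖x‖).const_mul (-l)).exp).const_mul k).div
      (hasDerivAt_id ‖x‖) hx').congr_deriv ?_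
    simp only [id_eq]
    field_simp
    ring
  have radial : yukawaKernelGradient k l x =
      (-(k * Real.exp (-l * ‖x‖) * (1 + l * ‖x‖) / ‖x‖ ^ 2) / ‖x‖) • x := by
    rw [yukawaKernelGradient, neg_div, div_div, ← pow_succ]
  exact radial ▸ hasGradientAt_comp_norm hx profile_deriv

section Integrability

variable [NormedSpace ℝ V] [FiniteDimensional ℝ V] [MeasurableSpace V] [BorelSpace V]
  {μ : Measure V} [μ.IsAddHaarMeasure]

lemma integrable_yukawaKernel (hV : 2 ≤ Module.finrank ℝ V) (k : ℝ) {l : ℝ} (hl : 0 < l) :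
    Integrable (yukawaKernel k l : V → ℝ) μ := by
  have : Nontrivial V := Module.nontrivial_of_finrank_pos (R := ℝ) (by lia)
  refine (integrable_fun_norm_addHaar μ (f := fun r => k * Real.exp (-l * r) / r)).2
    (IntegrableOn.congr_fun
      ((integrableOn_pow_mul_exp_neg_mul_Ioi (Module.finrank ℝ V - 2) hl).const_mul k)
      (fun r hr => ?_) measurableSet_Ioi)
  have hr' : r ≠ 0 := ne_of_gt hr
  obtain ⟨d, hd⟩ := Nat.exists_eq_add_of_le' hV
  simp only [hd, Nat.add_sub_cancel, Nat.add_one_sub_one, pow_succ, smul_eq_mul]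
  field_simp

-- `r ^ (d - 1)` is the Jacobian of polar coordinates in dimension `d`.
lemma pow_smul_norm_yukawaKernelGradient_profile {d : ℕ} (hd : 3 ≤ d) (k l : ℝ) {r : ℝ}
    (hr : r ≠ 0) :
    r ^ (d - 1) • (|k| * (Real.exp (-l * r) * (1 + l * r) / r ^ 2)) =
      |k| * (r ^ (d - 3) * Real.exp (-l * r) + l * (r ^ (d - 2) * Real.exp (-l * r))) := by
  obtain ⟨d, rfl⟩ := Nat.exists_eq_add_of_le' hd
  simp only [Nat.add_sub_cancel, Nat.add_succ_sub_one, Nat.reduceSubDiff, pow_succ, smul_eq_mul]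
  field_simp

lemma integrable_yukawaKernelGradient (hV : 3 ≤ Module.finrank ℝ V) (k : ℝ) {l : ℝ}
    (hl : 0 < l) : Integrable (yukawaKernelGradient k l : V → V) μ := by
  have : Nontrivial V := Module.nontrivial_of_finrank_pos (R := ℝ) (by lia)
  have meas : AEStronglyMeasurable (yukawaKernelGradient k l : V → V) μ := by
    unfold yukawaKernelGradient
    exact Measurable.aestronglyMeasurable (by fun_prop)
  rw [← integrable_norm_iff meas]
  simp only [norm_yukawaKernelGradient k hl.le]
  have profile_integrable (n : ℕ) := integrableOn_pow_mul_exp_neg_mul_Ioi n hl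
  have radial_integrable := ((profile_integrable (Module.finrank ℝ V - 3)).add
    ((profile_integrable (Module.finrank ℝ V - 2)).const_mul l)).const_mul |k|
  refine (integrable_fun_norm_addHaar μ
    (f := fun r => |k| * (Real.exp (-l * r) * (1 + l * r) / r ^ 2))).2
    (IntegrableOn.congr_fun radial_integrable (fun r hr => ?_) measurableSet_Ioi)
  exact (pow_smul_norm_yukawaKernelGradient_profile hV k l (ne_of_gt hr)).symm

end Integrability

lemma integral_norm_yukawaKernelGradient (k : ℝ) {l : ℝ} (hl : 0 < l) :
    ∫ x : EuclideanSpace ℝ (Fin 3), ‖yukawaKernelGradient k l x‖ = 8 * Real.pi * |k| / l := by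
  have radial_integral : ∫ r in Set.Ioi (0 : ℝ),
      r ^ (3 - 1) • (|k| * (Real.exp (-l * r) * (1 + l * r) / r ^ 2)) = |k| * (2 / l) := by
    rw [setIntegral_congr_fun measurableSet_Ioi
        fun r hr => pow_smul_norm_yukawaKernelGradient_profile le_rfl k l (ne_of_gt hr),
      integral_const_mul, integral_add (integrableOn_pow_mul_exp_neg_mul_Ioi _ hl)
        ((integrableOn_pow_mul_exp_neg_mul_Ioi _ hl).const_mul l), integral_const_mul,
      integral_pow_mul_exp_neg_mul_Ioi _ hl, integral_pow_mul_exp_neg_mul_Ioi _ hl]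
    simp only [Nat.reduceSub, Nat.factorial_zero, Nat.factorial_one, Nat.cast_one]
    field_simp
    ring
  have volume_ball :
      volume.real (Metric.ball (0 : EuclideanSpace ℝ (Fin 3)) 1) = Real.pi * 4 / 3 := by
    rw [Measure.real, EuclideanSpace.volume_ball_fin_three]
    simp [ENNReal.toReal_ofReal (by positivity : (0 : ℝ) ≤ Real.pi * 4 / 3)]
  simp only [norm_yukawaKernelGradient k hl.le]
  rw [integral_fun_norm_addHaar volume
      fun r => |k| * (Real.exp (-l * r) * (1 + l * r) / r ^ 2),
    finrank_euclideanSpace_fin, radial_integral, volume_ball, nsmul_eq_mul, smul_eq_mul]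
  ring

variable [InnerProductSpace ℝ V] [FiniteDimensional ℝ V] [MeasurableSpace V] [BorelSpace V]

/-- The Yukawa potential `G(·; k, l) * v` of `v`, a convolution for the Lebesgue measure; the bounded
factor `v` is on the left, so that the kernel is evaluated at `x - y`. -/
noncomputable def yukawaPotential (k l : ℝ) (v : V → ℝ) : V → ℝ :=
  v ⋆ yukawaKernel k l

lemma yukawaPotential_eq_integral (k l : ℝ) (v : V → ℝ) :
    yukawaPotential k l v = fun x => ∫ y, k * Real.exp (-l * ‖x - y‖) / ‖x - y‖ * v y := by
  ext x
  simp only [yukawaPotential, convolution_def, yukawaKernel, ContinuousLinearMap.lsmul_apply,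
    smul_eq_mul, mul_comm (v _)]

lemma convolution_yukawaKernelGradient_eq_integral (k l : ℝ) (v : V → ℝ) (x : V) :
    (v ⋆ yukawaKernelGradient k l) x =
      ∫ y, (-(k * Real.exp (-l * ‖x - y‖) * (1 + l * ‖x - y‖) / ‖x - y‖ ^ 3) * v y) • (x - y) := by
  simp only [convolution_def, yukawaKernelGradient, ContinuousLinearMap.lsmul_apply, smul_smul,
    mul_comm (v _)]

theorem yukawa_potential_C1b_general (hV : 3 ≤ Module.finrank ℝ V) (k : ℝ) {l : ℝ} (hl : 0 < l)
    {v : V → ℝ} (hv : AEStronglyMeasurable v) {M : ℝ} (hM : ∀ᵐ y, ‖v y‖ ≤ M) :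
    ContDiff ℝ 1 (yukawaPotential k l v) ∧
    (∀ x, gradient (yukawaPotential k l v) x = (v ⋆ yukawaKernelGradient k l) x) ∧
    ∀ x, ‖gradient (yukawaPotential k l v) x‖ ≤ (∫ y : V, ‖yukawaKernelGradient k l y‖) * M := by
  have one_lt_finrank : 1 < Module.finrank ℝ V := by lia
  have kernel_int : Integrable (yukawaKernel k l : V → ℝ) :=
    integrable_yukawaKernel one_lt_finrank k hl
  have grad_int : Integrable (yukawaKernelGradient k l : V → V) :=
    integrable_yukawaKernelGradient hV k hl
  have kernel_grad (z : V) (hz : z ≠ 0) := hasGradientAt_yukawaKernel k l hz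
  have grad_cont := continuousOn_yukawaKernelGradient (V := V) k l
  have gradient_eq (x : V) :
      gradient (yukawaPotential k l v) x = (v ⋆ yukawaKernelGradient k l) x :=
    (hasGradientAt_convolution_of_ae_norm_le one_lt_finrank hv hM kernel_int grad_int kernel_grad
      grad_cont x).gradient
  refine ⟨contDiff_one_convolution_of_ae_norm_le one_lt_finrank hv hM kernel_int grad_int
    kernel_grad grad_cont, gradient_eq, fun x => ?_⟩
  have : Nontrivial V := Module.nontrivial_of_finrank_pos (R := ℝ) (by lia)
  rw [gradient_eq, mul_comm]
  simpa only [ContinuousLinearMap.opNorm_lsmul, one_mul] using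
    norm_convolution_le_of_ae_norm_le (.lsmul ℝ ℝ) hM grad_int x

end Yukawa

/-- For `k, λ > 0`, `D ⊂ ℝ³` bounded, and `v` bounded measurable supported in `D`,
the Yukawa potential `w(x) = ∫ k e^{−λ‖x−y‖}/‖x−y‖ · v(y) dy` is continuously
differentiable with gradient obtained by differentiating under the integral sign,
`∇w(x) = ∫ ∇ₓG(x−y) v(y) dy`, and `‖∇w(x)‖ ≤ (8πk/λ)·sup|v|`;
that is, `w ∈ C¹_b(ℝ³; ℝ)`. -/
theorem yukawa_potential_C1b (k lam : ℝ) (hk : 0 < k) (hlam : 0 < lam)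
    (D : Set (EuclideanSpace ℝ (Fin 3))) (hD : Bornology.IsBounded D)
    (v : EuclideanSpace ℝ (Fin 3) → ℝ) (hv : Measurable v)
    (M : ℝ) (hM : ∀ y, |v y| ≤ M)
    (hsupp : Function.support v ⊆ D) :
    ContDiff ℝ 1 (fun x : EuclideanSpace ℝ (Fin 3) =>
      ∫ y, k * Real.exp (-lam * ‖x - y‖) / ‖x - y‖ * v y) ∧
    (∀ x : EuclideanSpace ℝ (Fin 3),
      gradient (fun x' : EuclideanSpace ℝ (Fin 3) =>
          ∫ y, k * Real.exp (-lam * ‖x' - y‖) / ‖x' - y‖ * v y) x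
        = ∫ y, (-(k * Real.exp (-lam * ‖x - y‖) * (1 + lam * ‖x - y‖) / ‖x - y‖ ^ 3)
            * v y) • (x - y)) ∧
    ∀ x : EuclideanSpace ℝ (Fin 3),
      ‖gradient (fun x' : EuclideanSpace ℝ (Fin 3) =>
          ∫ y, k * Real.exp (-lam * ‖x' - y‖) / ‖x' - y‖ * v y) x‖
        ≤ 8 * Real.pi * k / lam * M := by
  simpa only [yukawaPotential_eq_integral, convolution_yukawaKernelGradient_eq_integral,
    integral_norm_yukawaKernelGradient k hlam, abs_of_pos hk] using
    yukawa_potential_C1b_general (by simp) k hlam hv.aestronglyMeasurable (.of_forall hM)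
end

section
/- Let k, λ > 0 and let v : ℝ³ → ℝ be smooth with compact support. Then the Yukawa potential w(x) := ∫_{ℝ³} k·e^{−λ‖x−y‖}/‖x−y‖ · v(y) dy is smooth on ℝ³ and satisfies λ²·w(x) − Δw(x) = 4πk·v(x) for every x ∈ ℝ³, where Δ denotes the Laplacian (the sum of the second partial derivatives). Equivalently, the Yukawa kernel G(·; k, λ) is the fundamental solution of the elliptic operator Λ = (1/(4πk))(λ²I − Δ). -/
open MeasureTheory

/-- The Laplacian of `f : ℝ³ → ℝ`, defined as the sum of the second partial
derivatives in the standard coordinate directions. -/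
noncomputable def laplacian (f : EuclideanSpace ℝ (Fin 3) → ℝ)
    (x : EuclideanSpace ℝ (Fin 3)) : ℝ :=
  ∑ i : Fin 3,
    fderiv ℝ (fun z => fderiv ℝ f z (EuclideanSpace.single i (1 : ℝ))) x
      (EuclideanSpace.single i (1 : ℝ))

/-!
Replace `‖t‖` in the kernel by `s = √(ε² + ‖t‖²)`. The regularised kernel `A_ε = k e^{-λs}/s` is
smooth, and a computation with radial functions gives

  `(λ² - Δ) A_ε = (ε² / s⁵) · k ((λs)² + 3λs + 3) e^{-λs}`.

The first factor is an approximate identity of mass `4π/3` and the second equals `3k` at `s = 0`, so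
`(λ² - Δ) A_ε ⋆ v → 4πk v`. Integrating by parts, the left-hand side is also `A_ε ⋆ (λ² - Δ) v`. By
dominated convergence this tends to `A₀ ⋆ (λ² - Δ) v = (λ² - Δ) (A₀ ⋆ v)`, where `A₀` is the Yukawa
kernel, which is only locally integrable, so that here the derivatives must fall on `v`.
-/

namespace Yukawa

open Filter Topology Set Module
open scoped Convolution RealInnerProductSpace

local notation "ℝ³" => EuclideanSpace ℝ (Fin 3)

section Convolution

variable {E F F' G : Type*} [Sub E] [MeasurableSpace E] {μ : Measure E}
  [NormedAddCommGroup F] [NormedSpace ℝ F] [NormedAddCommGroup F'] [NormedSpace ℝ F']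
  [NormedAddCommGroup G] [NormedSpace ℝ G] (L : F →L[ℝ] F' →L[ℝ] G)

lemma convolution_sub {f : E → F} {g g' : E → F'} (h : ConvolutionExists f g L μ)
    (h' : ConvolutionExists f g' L μ) :
    f ⋆[L, μ] (g - g') = f ⋆[L, μ] g - f ⋆[L, μ] g' := by
  ext x
  simp only [convolution_def, Pi.sub_apply, map_sub, integral_sub (h x) (h' x)]

lemma sub_convolution {f f' : E → F} {g : E → F'} (h : ConvolutionExists f g L μ)
    (h' : ConvolutionExists f' g L μ) :
    (f - f') ⋆[L, μ] g = f ⋆[L, μ] g - f' ⋆[L, μ] g := by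
  ext x
  simp only [convolution_def, Pi.sub_apply, map_sub, _root_.sub_apply, integral_sub (h x) (h' x)]

lemma convolution_finsetSum {ι : Type*} (s : Finset ι) {f : E → F} {g : ι → E → F'}
    (h : ∀ i ∈ s, ConvolutionExists f (g i) L μ) :
    f ⋆[L, μ] (∑ i ∈ s, g i) = ∑ i ∈ s, f ⋆[L, μ] (g i) := by
  ext x
  simp only [convolution_def, Finset.sum_apply, map_sum]
  exact integral_finsetSum s fun i hi => h i hi x

lemma finsetSum_convolution {ι : Type*} (s : Finset ι) {f : ι → E → F} {g : E → F'}
    (h : ∀ i ∈ s, ConvolutionExists (f i) g L μ) :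
    (∑ i ∈ s, f i) ⋆[L, μ] g = ∑ i ∈ s, (f i) ⋆[L, μ] g := by
  ext x
  simp only [convolution_def, Finset.sum_apply, map_sum, _root_.sum_apply]
  exact integral_finsetSum s fun i hi => h i hi x

end Convolution

section DirDeriv

variable {E F F' G : Type*} [NormedAddCommGroup E] [NormedSpace ℝ E]
  [NormedAddCommGroup F] [NormedSpace ℝ F] [NormedAddCommGroup F'] [NormedSpace ℝ F']
  [NormedAddCommGroup G] [NormedSpace ℝ G]

/-- The directional derivative of `f` along the constant vector field `a`, as an operator on
functions so that it can be iterated. -/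
noncomputable def dirDeriv (a : E) (f : E → F) : E → F := fun x => fderiv ℝ f x a

variable {a : E}

lemma contDiff_dirDeriv {f : E → F} {m n : WithTop ℕ∞} (hf : ContDiff ℝ n f) (hmn : m + 1 ≤ n) :
    ContDiff ℝ m (dirDeriv a f) :=
  (hf.fderiv_right hmn).clm_apply contDiff_const

lemma continuous_dirDeriv {f : E → F} (hf : ContDiff ℝ 1 f) : Continuous (dirDeriv a f) :=
  (contDiff_dirDeriv (m := 0) hf (by simp)).continuous

lemma hasCompactSupport_dirDeriv {f : E → F} (hf : HasCompactSupport f) :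
    HasCompactSupport (dirDeriv a f) :=
  hf.fderiv_apply ℝ a

lemma dirDeriv_comp_const_sub {f : E → F} {x t : E} (hf : DifferentiableAt ℝ f (x - t)) :
    dirDeriv a (fun t => f (x - t)) t = -dirDeriv a f (x - t) := by
  have h := hf.hasFDerivAt.comp t ((hasFDerivAt_id t).const_sub x)
  change fderiv ℝ (f ∘ fun t => x - id t) t a = _
  simp [h.fderiv, dirDeriv]

variable [MeasurableSpace E] [BorelSpace E] {μ : Measure E} (L : F →L[ℝ] F' →L[ℝ] G)

lemma dirDeriv_convolution [SFinite μ] [μ.IsAddLeftInvariant] {f : E → F} {g : E → F'}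
    (hf : LocallyIntegrable f μ) (hg : ContDiff ℝ 1 g) (hgc : HasCompactSupport g) :
    dirDeriv a (f ⋆[L, μ] g) = f ⋆[L, μ] dirDeriv a g := by
  ext x
  rw [dirDeriv, (hgc.hasFDerivAt_convolution_right L hf hg x).fderiv,
    convolution_precompR_apply L hf (hgc.fderiv ℝ) (hg.continuous_fderiv one_ne_zero)]
  rfl

lemma convolution_dirDeriv_comm [FiniteDimensional ℝ E] [μ.IsAddHaarMeasure] {f : E → F}
    {g : E → F'} (hf : ContDiff ℝ 1 f) (hg : ContDiff ℝ 1 g) (hgc : HasCompactSupport g) :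
    f ⋆[L, μ] dirDeriv a g = dirDeriv a f ⋆[L, μ] g := by
  ext x
  have hfg : Integrable (fun t => L (f t) (g (x - t))) μ :=
    hgc.convolutionExists_right L hf.continuous.locallyIntegrable hg.continuous x
  have hf'g : Integrable (fun t => L (dirDeriv a f t) (g (x - t))) μ :=
    hgc.convolutionExists_right L (continuous_dirDeriv hf).locallyIntegrable hg.continuous x
  have hfg' : Integrable (fun t => L (f t) (dirDeriv a g (x - t))) μ :=
    (hasCompactSupport_dirDeriv hgc).convolutionExists_right L hf.continuous.locallyIntegrable
      (continuous_dirDeriv hg) x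
  have reflect (t : E) : fderiv ℝ (fun t => g (x - t)) t a = -dirDeriv a g (x - t) :=
    dirDeriv_comp_const_sub (hg.differentiable one_ne_zero (x - t))
  have parts := integral_bilinear_fderiv_right_eq_neg_left_of_integrable (μ := μ) (B := L) (v := a)
    (f := f) (g := fun t => g (x - t)) hf'g
    (by simpa only [reflect, map_neg] using! hfg'.neg) hfg
    (fun t _ => hf.differentiable one_ne_zero t)
    (fun t _ => (hg.differentiable one_ne_zero).comp (differentiable_id.const_sub x) t)
  simpa only [reflect, map_neg, integral_neg, neg_inj] using! parts

end DirDeriv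

section ScreenedPoisson

/-- The screened Poisson operator `λ² I - Δ` on functions on `ℝ³`. -/
noncomputable def screenedPoisson (lam : ℝ) (u : ℝ³ → ℝ) : ℝ³ → ℝ := lam ^ 2 • u - laplacian u

lemma laplacian_eq_sum_dirDeriv (u : ℝ³ → ℝ) :
    laplacian u =
      ∑ i, dirDeriv (EuclideanSpace.single i 1) (dirDeriv (EuclideanSpace.single i 1) u) := by
  ext x
  simp only [Finset.sum_apply]
  rfl

variable {u : ℝ³ → ℝ}

lemma contDiff_one_dirDeriv {a : ℝ³} (hu : ContDiff ℝ 2 u) : ContDiff ℝ 1 (dirDeriv a u) :=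
  contDiff_dirDeriv hu one_add_one_eq_two.le

lemma continuous_laplacian (hu : ContDiff ℝ 2 u) : Continuous (laplacian u) := by
  rw [laplacian_eq_sum_dirDeriv]
  exact Finset.sum_induction _ Continuous (fun _ _ => Continuous.add) continuous_zero fun i _ =>
    continuous_dirDeriv (contDiff_one_dirDeriv hu)

lemma hasCompactSupport_laplacian (hu : HasCompactSupport u) :
    HasCompactSupport (laplacian u) := by
  rw [laplacian_eq_sum_dirDeriv]
  exact .finset_sum fun i _ => hasCompactSupport_dirDeriv (hasCompactSupport_dirDeriv hu)

lemma continuous_screenedPoisson (lam : ℝ) (hu : ContDiff ℝ 2 u) :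
    Continuous (screenedPoisson lam u) :=
  (hu.continuous.const_smul _).sub (continuous_laplacian hu)

lemma hasCompactSupport_screenedPoisson (lam : ℝ) (hu : HasCompactSupport u) :
    HasCompactSupport (screenedPoisson lam u) :=
  .sub (hu.smul_left (f := fun _ => lam ^ 2)) (hasCompactSupport_laplacian hu)

lemma laplacian_convolution {A : ℝ³ → ℝ} (hA : LocallyIntegrable A) (hu : ContDiff ℝ 2 u)
    (huc : HasCompactSupport u) : laplacian (A ⋆ u) = A ⋆ laplacian u := by
  have hu' (a : ℝ³) := contDiff_one_dirDeriv (a := a) hu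
  have huc' (a : ℝ³) := hasCompactSupport_dirDeriv (a := a) huc
  rw [laplacian_eq_sum_dirDeriv, laplacian_eq_sum_dirDeriv, convolution_finsetSum _ _ fun i _ =>
    (hasCompactSupport_dirDeriv (huc' _)).convolutionExists_right _ hA
    (continuous_dirDeriv (hu' _))]
  refine Finset.sum_congr rfl fun i _ => ?_
  rw [dirDeriv_convolution _ hA (hu.of_le one_le_two) huc,
    dirDeriv_convolution _ hA (hu' _) (huc' _)]

lemma convolution_laplacian_comm {A : ℝ³ → ℝ} (hA : ContDiff ℝ 2 A) (hu : ContDiff ℝ 2 u)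
    (huc : HasCompactSupport u) : A ⋆ laplacian u = laplacian A ⋆ u := by
  have hA' (a : ℝ³) := contDiff_one_dirDeriv (a := a) hA
  rw [← laplacian_convolution hA.continuous.locallyIntegrable hu huc, laplacian_eq_sum_dirDeriv,
    laplacian_eq_sum_dirDeriv, finsetSum_convolution _ _ fun i _ =>
    huc.convolutionExists_right _ (continuous_dirDeriv (hA' _)).locallyIntegrable hu.continuous]
  refine Finset.sum_congr rfl fun i _ => ?_
  rw [dirDeriv_convolution _ hA.continuous.locallyIntegrable (hu.of_le one_le_two) huc,
    convolution_dirDeriv_comm _ (hA.of_le one_le_two) (hu.of_le one_le_two) huc,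
    dirDeriv_convolution _ (hA' _).continuous.locallyIntegrable (hu.of_le one_le_two) huc,
    convolution_dirDeriv_comm _ (hA' _) (hu.of_le one_le_two) huc]

lemma screenedPoisson_convolution (lam : ℝ) {A : ℝ³ → ℝ} (hA : LocallyIntegrable A)
    (hu : ContDiff ℝ 2 u) (huc : HasCompactSupport u) :
    screenedPoisson lam (A ⋆ u) = A ⋆ screenedPoisson lam u := by
  have hsmul : ConvolutionExists A (lam ^ 2 • u) (ContinuousLinearMap.lsmul ℝ ℝ) :=
    (huc.smul_left (f := fun _ => lam ^ 2)).convolutionExists_right _ hA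
      (hu.continuous.const_smul _)
  have hlap : ConvolutionExists A (laplacian u) (ContinuousLinearMap.lsmul ℝ ℝ) :=
    (hasCompactSupport_laplacian huc).convolutionExists_right _ hA (continuous_laplacian hu)
  simp only [screenedPoisson, laplacian_convolution hA hu huc, convolution_sub _ hsmul hlap,
    convolution_smul]

lemma convolution_screenedPoisson_comm (lam : ℝ) {A : ℝ³ → ℝ} (hA : ContDiff ℝ 2 A)
    (hu : ContDiff ℝ 2 u) (huc : HasCompactSupport u) :
    A ⋆ screenedPoisson lam u = screenedPoisson lam A ⋆ u := by
  have hsmul : ConvolutionExists (lam ^ 2 • A) u (ContinuousLinearMap.lsmul ℝ ℝ) :=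
    huc.convolutionExists_right _ (hA.continuous.const_smul _).locallyIntegrable hu.continuous
  have hlap : ConvolutionExists (laplacian A) u (ContinuousLinearMap.lsmul ℝ ℝ) :=
    huc.convolutionExists_right _ (continuous_laplacian hA).locallyIntegrable hu.continuous
  rw [← screenedPoisson_convolution lam hA.continuous.locallyIntegrable hu huc]
  simp only [screenedPoisson, laplacian_convolution hA.continuous.locallyIntegrable hu huc,
    convolution_laplacian_comm hA hu huc, sub_convolution _ hsmul hlap, smul_convolution]

end ScreenedPoisson

section RegNorm

variable {E : Type*} [NormedAddCommGroup E]

/-- The regularised norm `√(ε² + ‖t‖²)`, which is smooth and positive for `ε ≠ 0` and decreases to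
`‖t‖` as `ε ↓ 0`. -/
noncomputable def regNorm (ε : ℝ) (t : E) : ℝ := √(ε ^ 2 + ‖t‖ ^ 2)

lemma regNorm_zero (t : E) : regNorm 0 t = ‖t‖ := by
  simp [regNorm]

lemma regNorm_sq (ε : ℝ) (t : E) : regNorm ε t ^ 2 = ε ^ 2 + ‖t‖ ^ 2 :=
  Real.sq_sqrt (by positivity)

lemma regNorm_pos {ε : ℝ} (hε : ε ≠ 0) (t : E) : 0 < regNorm ε t :=
  Real.sqrt_pos.2 (by positivity)

lemma norm_le_regNorm (ε : ℝ) (t : E) : ‖t‖ ≤ regNorm ε t :=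
  Real.le_sqrt_of_sq_le (le_add_of_nonneg_left (sq_nonneg ε))

lemma sq_div_regNorm_pow_five_nonneg (ε : ℝ) (t : E) : 0 ≤ ε ^ 2 / regNorm ε t ^ 5 :=
  div_nonneg (sq_nonneg ε) (pow_nonneg (Real.sqrt_nonneg _) 5)

lemma continuous_regNorm : Continuous fun p : ℝ × E => regNorm p.1 p.2 := by
  unfold regNorm
  fun_prop

lemma regNorm_norm (ε : ℝ) (t : E) : regNorm ε ‖t‖ = regNorm ε t := by
  rw [regNorm, norm_norm, regNorm]

lemma regNorm_smul [NormedSpace ℝ E] {c : ℝ} (hc : 0 ≤ c) (ε : ℝ) (t : E) :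
    regNorm (c * ε) (c • t) = c * regNorm ε t := by
  rw [regNorm, regNorm, norm_smul, Real.norm_of_nonneg hc, mul_pow, mul_pow, ← mul_add,
    Real.sqrt_mul (sq_nonneg c), Real.sqrt_sq hc]

lemma tendsto_div_regNorm_atTop (ε : ℝ) :
    Tendsto (fun r : ℝ => r / regNorm ε r) atTop (𝓝 1) := by
  have hpath : Tendsto (fun r : ℝ => regNorm (r⁻¹ * ε) (1 : ℝ)) atTop (𝓝 1) := by
    have hcont : Continuous fun c : ℝ => regNorm (c * ε) (1 : ℝ) :=
      continuous_regNorm.comp (by fun_prop : Continuous fun c : ℝ => (c * ε, (1 : ℝ)))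
    refine (hcont.tendsto' 0 1 ?_).comp tendsto_inv_atTop_zero
    rw [zero_mul, regNorm_zero, norm_one]
  refine (inv_one (G := ℝ) ▸ hpath.inv₀ one_ne_zero).congr' ?_
  filter_upwards [eventually_gt_atTop 0] with r hr
  have hscale := regNorm_smul hr.le (r⁻¹ * ε) (1 : ℝ)
  rw [mul_inv_cancel_left₀ hr.ne', smul_eq_mul, mul_one] at hscale
  rw [hscale, div_mul_cancel_left₀ hr.ne']

variable [InnerProductSpace ℝ E] {ε : ℝ}

lemma contDiff_regNorm {n : WithTop ℕ∞} (hε : ε ≠ 0) :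
    ContDiff ℝ n (regNorm ε : E → ℝ) :=
  (contDiff_const.add (contDiff_norm_sq ℝ)).sqrt fun t => by positivity

lemma hasFDerivAt_regNorm (hε : ε ≠ 0) (t : E) :
    HasFDerivAt (regNorm ε) ((regNorm ε t)⁻¹ • innerSL ℝ t) t := by
  have h := ((hasStrictFDerivAt_norm_sq t).hasFDerivAt.const_add (ε ^ 2)).sqrt (by positivity)
  refine h.congr_fderiv ?_
  ext y
  simp only [one_div, mul_inv_rev, _root_.smul_apply, coe_innerSL_apply, nsmul_eq_mul,
    Nat.cast_ofNat, smul_eq_mul, regNorm]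
  ring

lemma hasFDerivAt_comp_regNorm (hε : ε ≠ 0) {ψ : ℝ → ℝ} {ψ' : ℝ} {t : E}
    (hψ : HasDerivAt ψ ψ' (regNorm ε t)) :
    HasFDerivAt (fun t => ψ (regNorm ε t)) ((ψ' / regNorm ε t) • innerSL ℝ t) t := by
  refine (hψ.comp_hasFDerivAt t (hasFDerivAt_regNorm hε t)).congr_fderiv ?_
  rw [smul_smul, div_eq_mul_inv]

lemma dirDeriv_comp_regNorm (hε : ε ≠ 0) {ψ ψ' : ℝ → ℝ}
    (hψ : ∀ s, 0 < s → HasDerivAt ψ (ψ' s) s) (a : E) :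
    dirDeriv a (fun t => ψ (regNorm ε t)) =
      fun t => ψ' (regNorm ε t) / regNorm ε t * ⟪t, a⟫ := by
  ext t
  rw [dirDeriv, (hasFDerivAt_comp_regNorm hε (hψ _ (regNorm_pos hε t))).fderiv]
  rfl

lemma dirDeriv_dirDeriv_comp_regNorm (hε : ε ≠ 0) {ψ ψ' ψ'' : ℝ → ℝ}
    (hψ : ∀ s, 0 < s → HasDerivAt ψ (ψ' s) s) (hψ' : ∀ s, 0 < s → HasDerivAt ψ' (ψ'' s) s)
    (a t : E) :
    dirDeriv a (dirDeriv a fun t => ψ (regNorm ε t)) t =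
      (ψ'' (regNorm ε t) - ψ' (regNorm ε t) / regNorm ε t) / regNorm ε t ^ 2 * ⟪t, a⟫ ^ 2 +
        ψ' (regNorm ε t) / regNorm ε t * ‖a‖ ^ 2 := by
  have hs := regNorm_pos hε t
  have hquot := (hψ' _ hs).fun_div (hasDerivAt_id _) hs.ne'
  have hinner : HasFDerivAt (fun t : E => ⟪t, a⟫) (innerSL ℝ a) t := by
    simpa only [real_inner_comm, innerSL_apply_apply] using! (innerSL ℝ a).hasFDerivAt
  have hprod := (hasFDerivAt_comp_regNorm hε hquot).mul hinner
  rw [dirDeriv_comp_regNorm hε hψ, dirDeriv]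
  refine (congrArg (· a) hprod.fderiv).trans ?_
  simp only [id_eq, mul_one, _root_.add_apply, _root_.smul_apply, coe_innerSL_apply,
    inner_self_eq_norm_sq_to_K, Real.ringHom_apply, smul_eq_mul]
  field_simp
  ring

lemma hasDerivAt_div_regNorm_pow_three (hε : ε ≠ 0) (r : ℝ) :
    HasDerivAt (fun r : ℝ => (r / regNorm ε r) ^ 3 / 3) (r ^ 2 * (ε ^ 2 / regNorm ε r ^ 5)) r := by
  have hs := regNorm_pos hε r
  have hsq : r ^ 2 = regNorm ε r ^ 2 - ε ^ 2 := by
    rw [regNorm_sq, Real.norm_eq_abs, sq_abs, add_sub_cancel_left]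
  have hreg : HasDerivAt (regNorm ε : ℝ → ℝ) (r / regNorm ε r) r := by
    refine (hasFDerivAt_regNorm hε r).hasDerivAt.congr_deriv ?_
    simp [div_eq_inv_mul]
  have hquot : HasDerivAt (fun r : ℝ => r / regNorm ε r) (ε ^ 2 / regNorm ε r ^ 3) r := by
    refine ((hasDerivAt_id r).fun_div hreg hs.ne').congr_deriv ?_
    rw [id, one_mul, mul_div_assoc', ← sq, hsq]
    field_simp
    ring
  refine ((hquot.fun_pow 3).div_const 3).congr_deriv ?_
  push_cast
  field_simp

end RegNorm

section RadialLaplacian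

lemma laplacian_comp_regNorm {ε : ℝ} (hε : ε ≠ 0) {ψ ψ' ψ'' : ℝ → ℝ}
    (hψ : ∀ s, 0 < s → HasDerivAt ψ (ψ' s) s) (hψ' : ∀ s, 0 < s → HasDerivAt ψ' (ψ'' s) s)
    (t : ℝ³) :
    laplacian (fun t => ψ (regNorm ε t)) t =
      ψ'' (regNorm ε t) + 2 / regNorm ε t * ψ' (regNorm ε t) -
        ε ^ 2 / regNorm ε t ^ 2 * (ψ'' (regNorm ε t) - ψ' (regNorm ε t) / regNorm ε t) := by
  have hs := regNorm_pos hε t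
  have hnorm : t 0 ^ 2 + t 1 ^ 2 + t 2 ^ 2 = regNorm ε t ^ 2 - ε ^ 2 := by
    rw [regNorm_sq, EuclideanSpace.real_norm_sq_eq, Fin.sum_univ_three]
    ring
  rw [laplacian_eq_sum_dirDeriv, Finset.sum_apply]
  simp only [dirDeriv_dirDeriv_comp_regNorm hε hψ hψ', EuclideanSpace.inner_single_right,
    Fin.sum_univ_three, PiLp.norm_single, norm_one, conj_trivial, one_mul]
  generalize regNorm ε t = s at *
  rw [show t 0 ^ 2 = s ^ 2 - ε ^ 2 - t 1 ^ 2 - t 2 ^ 2 by linarith]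
  field_simp
  ring

end RadialLaplacian

section ApproximateIdentity

lemma exists_forall_norm_mul_le {X Y : Type*} [TopologicalSpace X] [TopologicalSpace Y]
    {a : X → Y → ℝ} (ha : Continuous ↿a) {g : Y → ℝ} (hg : HasCompactSupport g)
    {S : Set X} (hS : IsCompact S) :
    ∃ C, 0 ≤ C ∧ ∀ s ∈ S, ∀ y, ‖a s y * g y‖ ≤ C * ‖g y‖ := by
  obtain ⟨C, hC⟩ := (hS.prod hg.isCompact).exists_bound_of_continuousOn ha.continuousOn
  refine ⟨|C|, abs_nonneg C, fun s hs y => ?_⟩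
  by_cases hy : y ∈ tsupport g
  · rw [norm_mul]
    gcongr
    exact (hC (s, y) ⟨hs, hy⟩).trans (le_abs_self C)
  · simp [image_eq_zero_of_notMem_tsupport hy]

variable {E : Type*} [NormedAddCommGroup E] [MeasurableSpace E] [BorelSpace E]

lemma tendsto_integral_rescale_smul {F : Type*} [NormedAddCommGroup F] [NormedSpace ℝ F]
    [CompleteSpace F] [NormedSpace ℝ E] [FiniteDimensional ℝ E] {μ : Measure E}
    [μ.IsAddHaarMeasure] {φ : E → ℝ} (hφ : Integrable φ μ) {h : ℝ → E → F}
    (hh : Continuous ↿h) {C : ℝ} (hC : ∀ᶠ ε in 𝓝[>] 0, ∀ t, ‖h ε t‖ ≤ C) :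
    Tendsto (fun ε : ℝ => ∫ t, ((ε ^ finrank ℝ E)⁻¹ * φ (ε⁻¹ • t)) • h ε t ∂μ) (𝓝[>] 0)
      (𝓝 ((∫ z, φ z ∂μ) • h 0 0)) := by
  have limit : Tendsto (fun ε => ∫ z, φ z • h ε (ε • z) ∂μ) (𝓝[>] 0)
      (𝓝 (∫ z, φ z • h 0 0 ∂μ)) := by
    refine tendsto_integral_filter_of_dominated_convergence (fun z => ‖φ z‖ * C)
      (.of_forall fun ε => ?_) ?_ (hφ.norm.mul_const C) (.of_forall fun z => ?_)
    · have : Continuous fun z => h ε (ε • z) :=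
        hh.comp (by fun_prop : Continuous fun z => (ε, ε • z))
      exact hφ.aestronglyMeasurable.smul this.aestronglyMeasurable
    · filter_upwards [hC] with ε hε
      refine .of_forall fun z => ?_
      rw [norm_smul]
      gcongr
      exact hε _
    · have : Continuous fun ε : ℝ => h ε (ε • z) :=
        hh.comp (by fun_prop : Continuous fun ε : ℝ => (ε, ε • z))
      have value : h 0 ((0 : ℝ) • z) = h 0 0 := by rw [zero_smul]
      exact ((this.tendsto' 0 _ value).mono_left nhdsWithin_le_nhds).const_smul _
  rw [← integral_smul_const]
  refine limit.congr' ?_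
  filter_upwards [self_mem_nhdsWithin] with ε (hε : 0 < ε)
  have scale := Measure.integral_comp_inv_smul_of_nonneg μ (fun z => φ z • h ε (ε • z)) hε.le
  simp only [smul_inv_smul₀ hε.ne'] at scale
  simp only [mul_smul, integral_smul, scale]
  rw [inv_smul_smul₀ (by positivity)]

lemma locallyIntegrable_norm_inv [NormedSpace ℝ E] [FiniteDimensional ℝ E] {μ : Measure E}
    [μ.IsAddHaarMeasure] (hE : 1 < finrank ℝ E) : LocallyIntegrable (fun t => ‖t‖⁻¹) μ := by
  refine locallyIntegrable_of_norm_le_rpow (α := 1) (C := 1) hE.le (mod_cast hE)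
    (.of_forall fun t => ?_) measurable_norm.inv.aestronglyMeasurable
  rw [norm_inv, norm_norm, Real.rpow_neg_one, one_mul]

lemma tendsto_integral_div_regNorm_mul {μ : Measure E} [NullSingletonClass μ]
    (hμ : LocallyIntegrable (fun t => ‖t‖⁻¹) μ) {a : ℝ → E → ℝ} (ha : Continuous ↿a) {g : E → ℝ}
    (hg : Continuous g) (hgc : HasCompactSupport g) :
    Tendsto (fun ε : ℝ => ∫ t, a ε t / regNorm ε t * g t ∂μ) (𝓝[>] 0)
      (𝓝 (∫ t, a 0 t / ‖t‖ * g t ∂μ)) := by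
  obtain ⟨C, -, hC⟩ := exists_forall_norm_mul_le ha hgc (isCompact_Icc (a := 0) (b := 1))
  have ha' (ε : ℝ) : Continuous (a ε) := ha.comp (by fun_prop : Continuous fun t => (ε, t))
  have ne_zero : ∀ᵐ t : E ∂μ, t ≠ 0 := compl_mem_ae_iff.2 (measure_singleton 0)
  refine tendsto_integral_filter_of_dominated_convergence (fun t => C * (‖t‖⁻¹ * ‖g t‖)) ?_ ?_ ?_ ?_
  · filter_upwards [self_mem_nhdsWithin] with ε (hε : 0 < ε)
    have hreg : Continuous (regNorm ε : E → ℝ) :=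
      continuous_regNorm.comp (by fun_prop : Continuous fun t => (ε, t))
    exact (((ha' ε).div hreg fun t => (regNorm_pos hε.ne' t).ne').mul hg).aestronglyMeasurable
  · filter_upwards [Ioc_mem_nhdsGT one_pos] with ε hε
    filter_upwards [ne_zero] with t ht
    have ht : 0 < ‖t‖ := norm_pos_iff.2 ht
    calc ‖a ε t / regNorm ε t * g t‖ = ‖a ε t * g t‖ * (regNorm ε t)⁻¹ := by
          rw [div_mul_eq_mul_div, norm_div, Real.norm_of_nonneg (regNorm_pos hε.1.ne' t).le,
            div_eq_mul_inv]
      _ ≤ (C * ‖g t‖) * ‖t‖⁻¹ :=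
          mul_le_mul (hC ε ⟨hε.1.le, hε.2⟩ t) (inv_anti₀ ht (norm_le_regNorm ε t))
            (inv_nonneg.2 (regNorm_pos hε.1.ne' t).le)
            ((norm_nonneg _).trans (hC ε ⟨hε.1.le, hε.2⟩ t))
      _ = C * (‖t‖⁻¹ * ‖g t‖) := by ring
  · exact (hμ.integrable_smul_right_of_hasCompactSupport hg.norm hgc.norm).const_mul C
  · filter_upwards [ne_zero] with t ht
    have hpath : Continuous fun ε : ℝ => (ε, t) := by fun_prop
    have hreg : Tendsto (fun ε => regNorm ε t) (𝓝[>] 0) (𝓝 ‖t‖) :=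
      ((continuous_regNorm.comp hpath).tendsto' 0 _ (regNorm_zero t)).mono_left nhdsWithin_le_nhds
    have hnum : Tendsto (fun ε => a ε t) (𝓝[>] 0) (𝓝 (a 0 t)) :=
      ((ha.comp hpath).tendsto 0).mono_left nhdsWithin_le_nhds
    exact (hnum.div hreg (norm_ne_zero_iff.2 ht)).mul_const _

end ApproximateIdentity

section EuclideanSpace

variable {ε : ℝ}

lemma integrable_sq_div_regNorm_pow_five (hε : ε ≠ 0) :
    Integrable fun t : ℝ³ => ε ^ 2 / regNorm ε t ^ 5 := by
  have hradial := integrable_fun_norm_addHaar (volume : Measure ℝ³)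
    (f := fun r : ℝ => ε ^ 2 / regNorm ε r ^ 5)
  simp only [finrank_euclideanSpace_fin, smul_eq_mul, regNorm_norm] at hradial
  exact hradial.2 <| integrableOn_Ioi_deriv_of_nonneg'
    (fun r _ => hasDerivAt_div_regNorm_pow_three hε r)
    (fun r _ => mul_nonneg (sq_nonneg r) (sq_div_regNorm_pow_five_nonneg ε r))
    (((tendsto_div_regNorm_atTop ε).pow 3).div_const 3)

lemma integral_sq_div_regNorm_pow_five (hε : ε ≠ 0) :
    ∫ t : ℝ³, ε ^ 2 / regNorm ε t ^ 5 = 4 * Real.pi / 3 := by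
  have hradial := integral_fun_norm_addHaar (volume : Measure ℝ³)
    fun r : ℝ => ε ^ 2 / regNorm ε r ^ 5
  have hline := integral_Ioi_of_hasDerivAt_of_nonneg' (a := 0)
    (fun r _ => hasDerivAt_div_regNorm_pow_three hε r)
    (fun r _ => mul_nonneg (sq_nonneg r) (sq_div_regNorm_pow_five_nonneg ε r))
    (((tendsto_div_regNorm_atTop ε).pow 3).div_const 3)
  simp only [finrank_euclideanSpace_fin, smul_eq_mul, regNorm_norm, Nat.add_one_sub_one] at hradial
  have hball : volume.real (Metric.ball (0 : ℝ³) 1) = Real.pi * 4 / 3 := by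
    rw [measureReal_def, EuclideanSpace.volume_ball_fin_three, ENNReal.ofReal_one, one_pow, one_mul,
      ENNReal.toReal_ofReal (by positivity)]
  rw [hradial, hline, hball, zero_div, nsmul_eq_mul]
  push_cast
  ring

lemma tendsto_integral_sq_div_regNorm_pow_five_mul {h : ℝ → ℝ³ → ℝ} (hh : Continuous ↿h) {C : ℝ}
    (hC : ∀ᶠ ε in 𝓝[>] 0, ∀ t, ‖h ε t‖ ≤ C) :
    Tendsto (fun ε : ℝ => ∫ t, ε ^ 2 / regNorm ε t ^ 5 * h ε t) (𝓝[>] 0)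
      (𝓝 (4 * Real.pi / 3 * h 0 0)) := by
  have limit :=
    tendsto_integral_rescale_smul (integrable_sq_div_regNorm_pow_five one_ne_zero) hh hC
  rw [integral_sq_div_regNorm_pow_five one_ne_zero, smul_eq_mul] at limit
  refine limit.congr' ?_
  filter_upwards [self_mem_nhdsWithin] with ε (hε : 0 < ε)
  refine integral_congr_ae (.of_forall fun t => ?_)
  have hscale := regNorm_smul hε.le 1 (ε⁻¹ • t)
  rw [mul_one, smul_inv_smul₀ hε.ne'] at hscale
  simp only [hscale, finrank_euclideanSpace_fin, smul_eq_mul]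
  field_simp

end EuclideanSpace

section Kernel

/-- The radial profile of the Yukawa kernel: the kernel is `t ↦ yukawaProfile k lam ‖t‖`. It is kept
separate from the kernel so that it can also be composed with `regNorm ε`. -/
noncomputable def yukawaProfile (k lam s : ℝ) : ℝ := k * Real.exp (-lam * s) / s

variable (k lam : ℝ)

lemma hasDerivAt_yukawaProfile {s : ℝ} (hs : 0 < s) :
    HasDerivAt (yukawaProfile k lam) (-k * (lam * s + 1) * Real.exp (-lam * s) / s ^ 2) s := by
  have hexp := ((hasDerivAt_id s).const_mul (-lam)).exp.const_mul k
  refine (hexp.fun_div (hasDerivAt_id s) hs.ne').congr_deriv ?_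
  simp only [id]
  ring

lemma hasDerivAt_deriv_yukawaProfile {s : ℝ} (hs : 0 < s) :
    HasDerivAt (fun s => -k * (lam * s + 1) * Real.exp (-lam * s) / s ^ 2)
      (k * ((lam * s) ^ 2 + 2 * (lam * s) + 2) * Real.exp (-lam * s) / s ^ 3) s := by
  have hlin := (((hasDerivAt_id s).const_mul lam).add_const 1).const_mul (-k)
  have hexp := ((hasDerivAt_id s).const_mul (-lam)).exp
  refine ((hlin.fun_mul hexp).fun_div (hasDerivAt_pow 2 s) (pow_pos hs 2).ne').congr_deriv ?_
  simp only [id]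
  field_simp
  push_cast
  ring

lemma contDiff_yukawaProfile_regNorm {n : WithTop ℕ∞} {ε : ℝ} (hε : ε ≠ 0) :
    ContDiff ℝ n fun t : ℝ³ => yukawaProfile k lam (regNorm ε t) :=
  (contDiff_const.mul (contDiff_const.mul (contDiff_regNorm hε)).exp).div (contDiff_regNorm hε)
    fun t => (regNorm_pos hε t).ne'

lemma screenedPoisson_yukawaProfile_regNorm {ε : ℝ} (hε : ε ≠ 0) (t : ℝ³) :
    screenedPoisson lam (fun t => yukawaProfile k lam (regNorm ε t)) t =
      ε ^ 2 / regNorm ε t ^ 5 *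
        (k * ((lam * regNorm ε t) ^ 2 + 3 * (lam * regNorm ε t) + 3) *
          Real.exp (-lam * regNorm ε t)) := by
  have hs := regNorm_pos hε t
  rw [screenedPoisson, Pi.sub_apply, Pi.smul_apply,
    laplacian_comp_regNorm hε (fun _ => hasDerivAt_yukawaProfile k lam)
      (fun _ => hasDerivAt_deriv_yukawaProfile k lam), yukawaProfile, smul_eq_mul]
  field_simp
  ring

lemma locallyIntegrable_yukawaProfile_norm :
    LocallyIntegrable fun t : ℝ³ => yukawaProfile k lam ‖t‖ := by
  have hinv : LocallyIntegrable fun t : ℝ³ => ‖t‖⁻¹ := locallyIntegrable_norm_inv (by simp)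
  have hcont : Continuous fun t : ℝ³ => k * Real.exp (-lam * ‖t‖) := by fun_prop
  exact locallyIntegrable_iff.2 fun K hK =>
    (hinv.integrableOn_isCompact hK).continuousOn_mul hcont.continuousOn hK

lemma tendsto_yukawaProfile_regNorm_convolution {f : ℝ³ → ℝ} (hf : Continuous f)
    (hfc : HasCompactSupport f) (x : ℝ³) :
    Tendsto (fun ε => ((fun t => yukawaProfile k lam (regNorm ε t)) ⋆ f) x) (𝓝[>] 0)
      (𝓝 (((fun t => yukawaProfile k lam ‖t‖) ⋆ f) x)) := by
  have hnum : Continuous ↿fun (ε : ℝ) (t : ℝ³) => k * Real.exp (-lam * regNorm ε t) :=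
    continuous_const.mul (Real.continuous_exp.comp (continuous_const.mul continuous_regNorm))
  have hinv : LocallyIntegrable fun t : ℝ³ => ‖t‖⁻¹ := locallyIntegrable_norm_inv (by simp)
  have limit := tendsto_integral_div_regNorm_mul hinv hnum (hf.comp (continuous_sub_left x))
    (hfc.comp_homeomorph (Homeomorph.subLeft x))
  simpa only [regNorm_zero] using! limit

lemma tendsto_screenedPoisson_yukawaProfile_regNorm_convolution {f : ℝ³ → ℝ} (hf : Continuous f)
    (hfc : HasCompactSupport f) (x : ℝ³) :
    Tendsto (fun ε => (screenedPoisson lam (fun t => yukawaProfile k lam (regNorm ε t)) ⋆ f) x)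
      (𝓝[>] 0) (𝓝 (4 * Real.pi * k * f x)) := by
  let a (ε : ℝ) (t : ℝ³) : ℝ :=
    k * ((lam * regNorm ε t) ^ 2 + 3 * (lam * regNorm ε t) + 3) * Real.exp (-lam * regNorm ε t)
  have ha : Continuous ↿a := by
    have hprofile : Continuous fun s =>
        k * ((lam * s) ^ 2 + 3 * (lam * s) + 3) * Real.exp (-lam * s) := by fun_prop
    exact hprofile.comp continuous_regNorm
  have hg : Continuous fun t => f (x - t) := hf.comp (continuous_sub_left x)
  obtain ⟨M, hM⟩ := hf.bounded_above_of_compact_support hfc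
  obtain ⟨C, hC₀, hC⟩ := exists_forall_norm_mul_le ha (hfc.comp_homeomorph (Homeomorph.subLeft x))
    (isCompact_Icc (a := 0) (b := 1))
  have bound : ∀ᶠ ε in 𝓝[>] 0, ∀ t, ‖a ε t * f (x - t)‖ ≤ C * M := by
    filter_upwards [Ioc_mem_nhdsGT one_pos] with ε hε t
    exact (hC ε ⟨hε.1.le, hε.2⟩ t).trans (mul_le_mul_of_nonneg_left (hM _) hC₀)
  have limit := tendsto_integral_sq_div_regNorm_pow_five_mul
    (ha.mul (hg.comp continuous_snd)) bound
  have hvalue : 4 * Real.pi / 3 * (a 0 0 * f (x - 0)) = 4 * Real.pi * k * f x := by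
    simp only [a, regNorm_zero, norm_zero, mul_zero, Real.exp_zero, sub_zero]
    ring
  rw [← hvalue]
  refine limit.congr' ?_
  filter_upwards [self_mem_nhdsWithin] with ε (hε : 0 < ε)
  simp only [convolution_lsmul, screenedPoisson_yukawaProfile_regNorm k lam hε.ne', smul_eq_mul,
    mul_assoc, a]

lemma integral_yukawa_eq_convolution (v : ℝ³ → ℝ) :
    (fun x => ∫ y, k * Real.exp (-lam * ‖x - y‖) / ‖x - y‖ * v y) =
      (fun t => yukawaProfile k lam ‖t‖) ⋆ v := by
  ext x
  exact (convolution_lsmul_swap (μ := volume) (f := fun t : ℝ³ => yukawaProfile k lam ‖t‖)).symm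

lemma screenedPoisson_yukawa_convolution {v : ℝ³ → ℝ} (hv : ContDiff ℝ 2 v)
    (hvc : HasCompactSupport v) :
    screenedPoisson lam ((fun t => yukawaProfile k lam ‖t‖) ⋆ v) = (4 * Real.pi * k) • v := by
  ext x
  rw [screenedPoisson_convolution lam (locallyIntegrable_yukawaProfile_norm k lam) hv hvc]
  refine tendsto_nhds_unique (tendsto_yukawaProfile_regNorm_convolution k lam
    (continuous_screenedPoisson lam hv) (hasCompactSupport_screenedPoisson lam hvc) x) ?_
  refine (tendsto_screenedPoisson_yukawaProfile_regNorm_convolution k lam hv.continuous hvc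
    x).congr' ?_
  filter_upwards [self_mem_nhdsWithin] with ε (hε : 0 < ε)
  rw [convolution_screenedPoisson_comm lam (contDiff_yukawaProfile_regNorm k lam hε.ne') hv hvc]

end Kernel

end Yukawa

theorem yukawa_fundamental_solution_general (k lam : ℝ) {n : ℕ∞} (hn : 2 ≤ n)
    (v : EuclideanSpace ℝ (Fin 3) → ℝ) (hv : ContDiff ℝ n v) (hvsupp : HasCompactSupport v) :
    ContDiff ℝ n (fun x : EuclideanSpace ℝ (Fin 3) =>
      ∫ y, k * Real.exp (-lam * ‖x - y‖) / ‖x - y‖ * v y) ∧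
    ∀ x : EuclideanSpace ℝ (Fin 3),
      lam ^ 2 * (∫ y, k * Real.exp (-lam * ‖x - y‖) / ‖x - y‖ * v y)
        - laplacian (fun x' : EuclideanSpace ℝ (Fin 3) =>
            ∫ y, k * Real.exp (-lam * ‖x' - y‖) / ‖x' - y‖ * v y) x
        = 4 * Real.pi * k * v x := by
  have hpot := Yukawa.integral_yukawa_eq_convolution k lam v
  constructor
  · rw [hpot]
    exact hvsupp.contDiff_convolution_right _ (Yukawa.locallyIntegrable_yukawaProfile_norm k lam) hv
  · have hpde := Yukawa.screenedPoisson_yukawa_convolution k lam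
      (hv.of_le (WithTop.coe_le_coe.2 hn)) hvsupp
    rw [← hpot] at hpde
    exact congrFun hpde

/-- For `k, λ > 0` and `v` smooth with compact support, the Yukawa potential
`w(x) = ∫ k e^{−λ‖x−y‖}/‖x−y‖ · v(y) dy` is smooth and satisfies
`λ² w − Δw = 4πk v`; i.e. the Yukawa kernel is the fundamental solution of
`(1/(4πk))(λ² I − Δ)`. -/
theorem yukawa_fundamental_solution (k lam : ℝ) (hk : 0 < k) (hlam : 0 < lam)
    (v : EuclideanSpace ℝ (Fin 3) → ℝ)
    (hv : ContDiff ℝ (⊤ : ℕ∞) v) (hvsupp : HasCompactSupport v) :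
    ContDiff ℝ (⊤ : ℕ∞) (fun x : EuclideanSpace ℝ (Fin 3) =>
      ∫ y, k * Real.exp (-lam * ‖x - y‖) / ‖x - y‖ * v y) ∧
    ∀ x : EuclideanSpace ℝ (Fin 3),
      lam ^ 2 * (∫ y, k * Real.exp (-lam * ‖x - y‖) / ‖x - y‖ * v y)
        - laplacian (fun x' : EuclideanSpace ℝ (Fin 3) =>
            ∫ y, k * Real.exp (-lam * ‖x' - y‖) / ‖x' - y‖ * v y) x
        = 4 * Real.pi * k * v x := by
  exact yukawa_fundamental_solution_general k lam le_top v hv hvsupp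
end
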